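/- Let T = [A M; O B] and T' = [A' M'; O B'] be triangular algebras over a commutative ring R with 1/2 ∈ R, and let l : T → T' be a Lie isomorphism. Suppose that (1) every commuting R-linear map on A' is proper, or every commuting R-linear map on B' is proper; (2) π_{A'}(Z(T')) = Z(A') ≠ A' and π_{B'}(Z(T')) = Z(B') ≠ B'; (3) at least one of A, B is noncommutative; and (4) M' is loyal. Then l = m + n, where m : T → T' is an injective algebra homomorphism or the negative of an injective algebra anti-homomorphism, and n : T → Z(T') is an R-linear map with n([x, y]) = 0 for all x, y ∈ T. Moreover, if Z(T') = R·1, then m is surjective. -/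

import Mathlib

/-- A realization of the `R`-algebra `G` as a generalized matrix algebra
`[A M; N B]` arising from a Morita context `(A, B, M, N, Φ, Ψ)`:
`G` decomposes `R`-linearly as `A ⊕ M ⊕ N ⊕ B` (via the injections `ιA, ιM, ιN, ιB`
and the projections `pA, pM, pN, pB`), and multiplication in `G` follows the
matrix-like multiplication rules.  The bimodule actions of `A` and `B` on `M` and `N`
and the pairings `Φ : M ⊗ N → A`, `Ψ : N ⊗ M → B` are recovered from the
multiplication of `G`; the requirement that the corresponding products land in the
appropriate corner is expressed by the `mul_*` fields.  The standing assumption that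
`M` is faithful as a left `A`-module and as a right `B`-module is included. -/
structure GMA (R A B M N G : Type*) [CommRing R]
    [Ring A] [Algebra R A] [Ring B] [Algebra R B]
    [AddCommGroup M] [Module R M] [AddCommGroup N] [Module R N]
    [Ring G] [Algebra R G] where
  ιA : A →ₗ[R] G
  ιB : B →ₗ[R] G
  ιM : M →ₗ[R] G
  ιN : N →ₗ[R] G
  pA : G →ₗ[R] A
  pB : G →ₗ[R] B
  pM : G →ₗ[R] M
  pN : G →ₗ[R] N
  decomp : ∀ g : G, g = ιA (pA g) + ιM (pM g) + ιN (pN g) + ιB (pB g)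
  pA_ιA : ∀ a, pA (ιA a) = a
  pA_ιM : ∀ m, pA (ιM m) = 0
  pA_ιN : ∀ n, pA (ιN n) = 0
  pA_ιB : ∀ b, pA (ιB b) = 0
  pM_ιA : ∀ a, pM (ιA a) = 0
  pM_ιM : ∀ m, pM (ιM m) = m
  pM_ιN : ∀ n, pM (ιN n) = 0
  pM_ιB : ∀ b, pM (ιB b) = 0
  pN_ιA : ∀ a, pN (ιA a) = 0
  pN_ιM : ∀ m, pN (ιM m) = 0
  pN_ιN : ∀ n, pN (ιN n) = n
  pN_ιB : ∀ b, pN (ιB b) = 0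
  pB_ιA : ∀ a, pB (ιA a) = 0
  pB_ιM : ∀ m, pB (ιM m) = 0
  pB_ιN : ∀ n, pB (ιN n) = 0
  pB_ιB : ∀ b, pB (ιB b) = b
  one_def : (1 : G) = ιA 1 + ιB 1
  mul_AA : ∀ a a', ιA a * ιA a' = ιA (a * a')
  mul_BB : ∀ b b', ιB b * ιB b' = ιB (b * b')
  mul_AM : ∀ a m, ιA a * ιM m ∈ LinearMap.range ιM
  mul_MB : ∀ m b, ιM m * ιB b ∈ LinearMap.range ιM
  mul_BN : ∀ b n, ιB b * ιN n ∈ LinearMap.range ιN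
  mul_NA : ∀ n a, ιN n * ιA a ∈ LinearMap.range ιN
  mul_MN : ∀ m n, ιM m * ιN n ∈ LinearMap.range ιA
  mul_NM : ∀ n m, ιN n * ιM m ∈ LinearMap.range ιB
  mul_AB : ∀ a b, ιA a * ιB b = 0
  mul_BA : ∀ b a, ιB b * ιA a = 0
  mul_AN : ∀ a n, ιA a * ιN n = 0
  mul_NB : ∀ n b, ιN n * ιB b = 0
  mul_MA : ∀ m a, ιM m * ιA a = 0
  mul_BM : ∀ b m, ιB b * ιM m = 0
  mul_MM : ∀ m m', ιM m * ιM m' = 0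
  mul_NN : ∀ n n', ιN n * ιN n' = 0
  faithful_left : ∀ a : A, (∀ m : M, ιA a * ιM m = 0) → a = 0
  faithful_right : ∀ b : B, (∀ m : M, ιM m * ιB b = 0) → b = 0

/-!
Transport the Jordan product of `T` along `l` to a symmetric bilinear form `β` on `T'`. Since `x²`
commutes with `x` in `T` and `l` preserves commutators, `β t t` commutes with `t`. Under the
hypotheses on `T'` every such form has trace `z t² + μ(t) t + ν(t)` with central coefficients, and
completing the square shows that `φ = z l + κ`, for a central-valued `κ`, preserves squares modulo
the center. Since `⁅w, ⁅x, y⁆⁆` is a Jordan polynomial, comparing its images under `l` and `φ` gives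
`z³ = z`, and noncommutativity of `A` or `B` excludes `z = 0`; hence `z = ±1`. Then `φ` preserves
products, or reverses them, up to a central `2`-cocycle, and such a cocycle vanishes.
-/

open Subring (center mem_center_iff)

/-! ### Commuting maps and commuting forms -/

theorem eq_zero_of_add_self_eq_zero (R : Type*) {X : Type*} [Ring R] [Invertible (2 : R)]
    [AddCommGroup X] [Module R X] {x : X} (h : x + x = 0) : x = 0 := by
  rw [← invOf_smul_smul (2 : R) x, two_smul, h, smul_zero]

section Center

variable {R T : Type*} [CommRing R] [Ring T] [Algebra R T] {z : T}

theorem commute_of_mem_center (hz : z ∈ center T) (x : T) : Commute z x :=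
  (mem_center_iff.1 hz x).symm

theorem lie_eq_zero_of_mem_center (hz : z ∈ center T) (x : T) : ⁅z, x⁆ = 0 :=
  (commute_of_mem_center hz x).lie_eq

theorem mul_lie_of_mem_center (hz : z ∈ center T) (x y : T) : ⁅z * x, y⁆ = z * ⁅x, y⁆ := by
  rw [Ring.lie_def, Ring.lie_def, mul_sub, mul_assoc, ← mul_assoc y,
    mem_center_iff.1 hz y, mul_assoc]

theorem mem_center_of_forall_lie_eq_zero (h : ∀ x : T, ⁅z, x⁆ = 0) : z ∈ center T :=
  mem_center_iff.2 fun x => (sub_eq_zero.1 (h x)).symm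

theorem smul_mem_center (r : R) (hz : z ∈ center T) : r • z ∈ center T :=
  Set.smul_mem_center r hz

variable (R) in
theorem mem_center_of_add_self_mem [Invertible (2 : R)] (h : z + z ∈ center T) :
    z ∈ center T := by
  rw [← invOf_smul_smul (2 : R) z, two_smul]
  exact smul_mem_center _ h

theorem op_mem_center (hz : z ∈ center T) : MulOpposite.op z ∈ center Tᵐᵒᵖ :=
  MulOpposite.op_mem_center_iff.2 hz

theorem unop_mem_center {z : Tᵐᵒᵖ} (hz : z ∈ center Tᵐᵒᵖ) : z.unop ∈ center T :=
  MulOpposite.unop_mem_center_iff.2 hz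

end Center

/-- Every commuting `R`-linear map on `A` is proper. -/
def CommutingMapsProper (R A : Type*) [CommRing R] [Ring A] [Algebra R A] : Prop :=
  ∀ f : A →ₗ[R] A, (∀ a, f a * a = a * f a) →
    ∃ z ∈ center A, ∃ η : A →ₗ[R] A, (∀ a, η a ∈ center A) ∧ ∀ a, f a = z * a + η a

theorem CommutingMapsProper.op {R A : Type*} [CommRing R] [Ring A] [Algebra R A]
    (hA : CommutingMapsProper R A) : CommutingMapsProper R Aᵐᵒᵖ := by
  intro f hf
  let unopOp := (MulOpposite.opLinearEquiv R : A ≃ₗ[R] Aᵐᵒᵖ)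
  obtain ⟨z, hz, η, hη, hfz⟩ := hA (unopOp.symm.conj f)
    fun a => (congrArg MulOpposite.unop (hf (.op a))).symm
  refine ⟨.op z, op_mem_center hz, unopOp.conj η,
    fun a => op_mem_center (hη _), fun a => MulOpposite.unop_injective ?_⟩
  exact (hfz a.unop).trans (by rw [← mem_center_iff.1 hz]; rfl)

/-- A symmetric bilinear map `β` on an algebra whose trace `x ↦ β x x` is commuting. -/
structure CommutingForm (R T : Type*) [CommRing R] [Ring T] [Algebra R T] where
  toBilin : T →ₗ[R] T →ₗ[R] T
  symm' : ∀ x y, toBilin x y = toBilin y x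
  lie_self' : ∀ x, ⁅toBilin x x, x⁆ = 0

namespace CommutingForm

variable {R T : Type*} [CommRing R] [Ring T] [Algebra R T]

instance : CoeFun (CommutingForm R T) fun _ => T → T →ₗ[R] T := ⟨fun β => β.toBilin⟩

theorem symm (β : CommutingForm R T) (x y : T) : β x y = β y x := β.symm' x y

theorem add_left (β : CommutingForm R T) (x y w : T) : β (x + y) w = β x w + β y w := by simp

theorem add_right (β : CommutingForm R T) (x y w : T) : β x (y + w) = β x y + β x w := by simp

theorem lie_self (β : CommutingForm R T) (x : T) : ⁅β x x, x⁆ = 0 := β.lie_self' x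

theorem lie_cyclic [Invertible (2 : R)] (β : CommutingForm R T) (x y w : T) :
    ⁅β x y, w⁆ + ⁅β y w, x⁆ + ⁅β w x, y⁆ = 0 := by
  refine eq_zero_of_add_self_eq_zero R ?_
  have polar := congr($(β.lie_self (x + y + w)) - $(β.lie_self (x + y)) - $(β.lie_self (y + w))
    - $(β.lie_self (x + w)) + $(β.lie_self x) + $(β.lie_self y) + $(β.lie_self w))
  simp only [add_left, add_right, β.symm y x, β.symm w y, β.symm w x, Ring.lie_def] at polar ⊢
  linear_combination (norm := noncomm_ring) polar

/-- The trace of `β` has the standard form `x ↦ z x² + μ(x) x + ν(x)` with `z` central and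
`μ`, `ν` central-valued. -/
def IsProper (β : CommutingForm R T) : Prop :=
  ∃ z ∈ center T, ∃ μ : T →ₗ[R] T, (∀ x, μ x ∈ center T) ∧
    ∀ x, β x x - (z * (x * x) + μ x * x) ∈ center T

/-- The form obtained from `β` by subtracting the polarization of a standard trace. -/
def reduce (β : CommutingForm R T) {z : T} (hz : z ∈ center T) {μ : T →ₗ[R] T}
    (hμ : ∀ x, μ x ∈ center T) : CommutingForm R T where
  toBilin := β.toBilin - LinearMap.mk₂ R
    (fun x y => z * (x * y + y * x) + (μ x * y + μ y * x))
    (fun x x' y => by simp only [map_add]; noncomm_ring)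
    (fun r x y => by simp [mul_add, smul_add])
    (fun x y y' => by simp only [map_add]; noncomm_ring)
    (fun r x y => by simp [mul_add, smul_add])
  symm' x y := by
    rw [LinearMap.sub_apply, LinearMap.sub_apply, LinearMap.sub_apply, LinearMap.sub_apply,
      LinearMap.mk₂_apply, LinearMap.mk₂_apply, β.symm' x y, add_comm (x * y), add_comm (μ x * y)]
  lie_self' x := by
    have hβ := β.lie_self' x
    simp only [LinearMap.sub_apply, LinearMap.mk₂_apply, Ring.lie_def] at hβ ⊢
    linear_combination (norm := noncomm_ring)
      hβ + 2 * mem_center_iff.1 hz x * (x * x) + 2 * mem_center_iff.1 (hμ x) x * x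

theorem reduce_apply (β : CommutingForm R T) {z : T} (hz : z ∈ center T) {μ : T →ₗ[R] T}
    (hμ : ∀ x, μ x ∈ center T) (x y : T) :
    β.reduce hz hμ x y = β x y - (z * (x * y + y * x) + (μ x * y + μ y * x)) := rfl

theorem IsProper.of_reduce {β : CommutingForm R T} {z : T} {hz : z ∈ center T} {μ : T →ₗ[R] T}
    {hμ : ∀ x, μ x ∈ center T} (h : (β.reduce hz hμ).IsProper) : β.IsProper := by
  obtain ⟨z', hz', μ', hμ', h⟩ := h
  refine ⟨z' + (z + z), add_mem hz' (add_mem hz hz), μ' + (μ + μ),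
    fun x => add_mem (hμ' x) (add_mem (hμ x) (hμ x)), fun x => ?_⟩
  convert h x using 1
  simp only [reduce_apply, LinearMap.add_apply]
  noncomm_ring

theorem IsProper.of_forall_mem_center {β : CommutingForm R T} (h : ∀ x y, β x y ∈ center T) :
    β.IsProper :=
  ⟨0, zero_mem _, 0, fun _ => zero_mem _, fun x => by simpa using h x x⟩

/-- The same form, viewed on the opposite algebra. -/
def op (β : CommutingForm R T) : CommutingForm R Tᵐᵒᵖ where
  toBilin := LinearMap.mk₂ R (fun x y => .op (β x.unop y.unop))
    (fun x x' y => by simp) (fun r x y => by simp) (fun x y y' => by simp) (fun r x y => by simp)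
  symm' x y := congrArg MulOpposite.op (β.symm' x.unop y.unop)
  lie_self' x := MulOpposite.unop_injective <| by
    have h := β.lie_self' x.unop
    rw [Ring.lie_def, sub_eq_zero] at h
    simpa [Ring.lie_def, sub_eq_zero] using h.symm

theorem op_apply (β : CommutingForm R T) (x y : Tᵐᵒᵖ) : β.op x y = .op (β x.unop y.unop) := rfl

theorem IsProper.of_op {β : CommutingForm R T} (h : β.op.IsProper) : β.IsProper := by
  obtain ⟨z, hz, μ, hμ, h⟩ := h
  let opEquiv := (MulOpposite.opLinearEquiv R : T ≃ₗ[R] Tᵐᵒᵖ)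
  refine ⟨z.unop, unop_mem_center hz, opEquiv.symm.conj μ,
    fun x => unop_mem_center (hμ _), fun x => ?_⟩
  have h := unop_mem_center (h (.op x))
  rw [← mem_center_iff.1 hz, ← mem_center_iff.1 (hμ _)] at h
  exact h

end CommutingForm

/-! ### Triangular algebras -/

/-- A realization of `T` as the triangular algebra `[A M; O Cᵐᵒᵖ]`. The right action of the lower
corner on `M` is encoded as a left action of its opposite `C`, so that passing to `Tᵐᵒᵖ` exchanges
the roles of `A` and `C`. -/
structure TriangularCoords (R A C M T : Type*) [CommRing R] [Ring A] [Algebra R A]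
    [Ring C] [Algebra R C] [AddCommGroup M] [Module R M] [Module A M] [Module C M]
    [Ring T] [Algebra R T] where
  equiv : T ≃ₗ[R] A × M × C
  equiv_mul : ∀ x y, equiv (x * y) =
    ((equiv x).1 * (equiv y).1, (equiv x).1 • (equiv y).2.1 + (equiv y).2.2 • (equiv x).2.1,
      (equiv y).2.2 * (equiv x).2.2)
  faithful_left : ∀ a : A, (∀ m : M, a • m = 0) → a = 0
  faithful_right : ∀ c : C, (∀ m : M, c • m = 0) → c = 0

namespace TriangularCoords

variable {R A C M T : Type*} [CommRing R] [Ring A] [Algebra R A] [Ring C] [Algebra R C]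
  [AddCommGroup M] [Module R M] [Module A M] [Module C M] [Ring T] [Algebra R T]
  (e : TriangularCoords R A C M T)

/-- The projection onto the upper diagonal entry. -/
def left : T →ₗ[R] A := LinearMap.fst R A (M × C) ∘ₗ e.equiv

/-- The projection onto the off-diagonal entry. -/
def mid : T →ₗ[R] M := LinearMap.fst R M C ∘ₗ LinearMap.snd R A (M × C) ∘ₗ e.equiv

/-- The projection onto the lower diagonal entry. -/
def right : T →ₗ[R] C := LinearMap.snd R M C ∘ₗ LinearMap.snd R A (M × C) ∘ₗ e.equiv

/-- The inclusion of the upper diagonal corner. -/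
def inl : A →ₗ[R] T := e.equiv.symm ∘ₗ LinearMap.inl R A (M × C)

/-- The inclusion of the off-diagonal corner. -/
def inm : M →ₗ[R] T := e.equiv.symm ∘ₗ LinearMap.inr R A (M × C) ∘ₗ LinearMap.inl R M C

/-- The inclusion of the lower diagonal corner. -/
def inr : C →ₗ[R] T := e.equiv.symm ∘ₗ LinearMap.inr R A (M × C) ∘ₗ LinearMap.inr R M C

@[simp] theorem left_inl (a : A) : e.left (e.inl a) = a := by simp [left, inl]
@[simp] theorem mid_inl (a : A) : e.mid (e.inl a) = 0 := by simp [mid, inl]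
@[simp] theorem right_inl (a : A) : e.right (e.inl a) = 0 := by simp [right, inl]
@[simp] theorem left_inm (m : M) : e.left (e.inm m) = 0 := by simp [left, inm]
@[simp] theorem mid_inm (m : M) : e.mid (e.inm m) = m := by simp [mid, inm]
@[simp] theorem right_inm (m : M) : e.right (e.inm m) = 0 := by simp [right, inm]
@[simp] theorem left_inr (c : C) : e.left (e.inr c) = 0 := by simp [left, inr]
@[simp] theorem mid_inr (c : C) : e.mid (e.inr c) = 0 := by simp [mid, inr]
@[simp] theorem right_inr (c : C) : e.right (e.inr c) = c := by simp [right, inr]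

@[simp] theorem left_mul (x y : T) : e.left (x * y) = e.left x * e.left y := by
  simp [left, e.equiv_mul]

@[simp] theorem mid_mul (x y : T) :
    e.mid (x * y) = e.left x • e.mid y + e.right y • e.mid x := by
  simp [left, mid, right, e.equiv_mul]

@[simp] theorem right_mul (x y : T) : e.right (x * y) = e.right y * e.right x := by
  simp [right, e.equiv_mul]

variable {e} in
theorem ext {x y : T} (hl : e.left x = e.left y) (hm : e.mid x = e.mid y)
    (hr : e.right x = e.right y) : x = y :=
  e.equiv.injective (Prod.ext hl (Prod.ext hm hr))

theorem eq_inl_add_inm_add_inr (x : T) :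
    x = e.inl (e.left x) + e.inm (e.mid x) + e.inr (e.right x) := by
  apply e.ext <;> simp

@[simp] theorem left_lie (x y : T) : e.left ⁅x, y⁆ = ⁅e.left x, e.left y⁆ := by
  simp [Ring.lie_def]

@[simp] theorem mid_lie (x y : T) : e.mid ⁅x, y⁆ =
    e.left x • e.mid y + e.right y • e.mid x - (e.left y • e.mid x + e.right x • e.mid y) := by
  simp [Ring.lie_def]

theorem mid_lie_inl (t : T) (a : A) : e.mid ⁅t, e.inl a⁆ = -(a • e.mid t) := by simp

theorem mid_lie_inm (t : T) (m : M) : e.mid ⁅t, e.inm m⁆ = e.left t • m - e.right t • m := by simp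

theorem mid_lie_inr (t : T) (c : C) : e.mid ⁅t, e.inr c⁆ = c • e.mid t := by simp

@[simp] theorem right_lie (x y : T) : e.right ⁅x, y⁆ = ⁅e.right y, e.right x⁆ := by
  simp [Ring.lie_def]

theorem smul_smul_comm (e : TriangularCoords R A C M T) (a : A) (c : C) (m : M) :
    a • c • m = c • a • m := by
  simpa using congrArg e.mid (mul_assoc (e.inl a) (e.inm m) (e.inr c)).symm

theorem mid_inl_mul_inm (a : A) (m : M) : e.mid (e.inl a * e.inm m) = a • m := by simp

theorem smul_left_smul (e : TriangularCoords R A C M T) (r : R) (a : A) (m : M) :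
    (r • a) • m = r • a • m := by
  rw [← e.mid_inl_mul_inm, map_smul, smul_mul_assoc, map_smul, mid_inl_mul_inm]

theorem left_smul_smul (e : TriangularCoords R A C M T) (r : R) (a : A) (m : M) :
    a • r • m = r • a • m := by
  rw [← e.mid_inl_mul_inm, map_smul, mul_smul_comm, map_smul, mid_inl_mul_inm]

/-- The transposed realization: `Tᵐᵒᵖ` is triangular with the diagonal corners exchanged. -/
def swap : TriangularCoords R C A M Tᵐᵒᵖ where
  equiv := (MulOpposite.opLinearEquiv R).symm ≪≫ₗ e.equiv ≪≫ₗ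
    LinearEquiv.prodComm R A (M × C) ≪≫ₗ
    (LinearEquiv.prodComm R M C).prodCongr (LinearEquiv.refl R A) ≪≫ₗ
    LinearEquiv.prodAssoc R C M A
  equiv_mul x y := by simp [e.equiv_mul, add_comm]
  faithful_left := e.faithful_right
  faithful_right := e.faithful_left

@[simp] theorem left_swap (x : Tᵐᵒᵖ) : e.swap.left x = e.right x.unop := rfl
@[simp] theorem mid_swap (x : Tᵐᵒᵖ) : e.swap.mid x = e.mid x.unop := rfl
@[simp] theorem right_swap (x : Tᵐᵒᵖ) : e.swap.right x = e.left x.unop := rfl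
@[simp] theorem inl_swap (c : C) : e.swap.inl c = .op (e.inr c) := by apply e.swap.ext <;> simp
@[simp] theorem inm_swap (m : M) : e.swap.inm m = .op (e.inm m) := by apply e.swap.ext <;> simp

variable {e}

theorem left_mem_center {t : T} (ht : t ∈ center T) : e.left t ∈ center A :=
  mem_center_iff.2 fun a => by simpa using congrArg e.left (mem_center_iff.1 ht (e.inl a))

theorem right_mem_center {t : T} (ht : t ∈ center T) : e.right t ∈ center C :=
  mem_center_iff.2 fun c => by
    simpa using (congrArg e.right (mem_center_iff.1 ht (e.inr c))).symm

theorem mid_eq_zero_of_mem_center {t : T} (ht : t ∈ center T) : e.mid t = 0 := by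
  simpa using congrArg e.mid (mem_center_iff.1 ht (e.inl 1))

theorem left_smul_eq_right_smul {t : T} (ht : t ∈ center T) (m : M) :
    e.left t • m = e.right t • m := by
  simpa using (congrArg e.mid (mem_center_iff.1 ht (e.inm m))).symm

theorem mid_lie_inm_of_sub_inl_mem_center {t : T} {a : A} (h : t - e.inl a ∈ center T) (m : M) :
    e.mid ⁅t, e.inm m⁆ = a • m := by
  have hm := e.left_smul_eq_right_smul h m
  simp only [map_sub, left_inl, right_inl, sub_zero, sub_smul] at hm
  rw [mid_lie_inm, ← hm, sub_sub_cancel]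

/-- Centrality of the diagonal entries follows from faithfulness. -/
theorem mem_center_of_smul_eq {t : T} (hmid : e.mid t = 0)
    (h : ∀ m : M, e.left t • m = e.right t • m) : t ∈ center T := by
  refine mem_center_iff.2 fun x => e.ext ?_ ?_ ?_
  · rw [left_mul, left_mul, ← sub_eq_zero]
    refine e.faithful_left _ fun m => ?_
    rw [sub_smul, mul_smul, mul_smul, h, h, e.smul_smul_comm, sub_self]
  · simp [hmid, h]
  · rw [right_mul, right_mul, ← sub_eq_zero]
    refine e.faithful_right _ fun m => ?_
    rw [sub_smul, mul_smul, mul_smul, ← h, ← h, e.smul_smul_comm, sub_self]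

theorem eq_zero_of_mem_center_of_left_eq_zero {t : T} (ht : t ∈ center T) (h : e.left t = 0) :
    t = 0 := by
  refine e.ext (by simpa using h) (by simpa using mid_eq_zero_of_mem_center ht) ?_
  rw [map_zero]
  exact e.faithful_right _ fun m => by rw [← left_smul_eq_right_smul ht, h, zero_smul]

/-- The hypotheses on the target of the theorem: loyalty of `M`, noncommutativity of both diagonal
corners, and surjectivity of the projections of the center of `T` onto their centers. -/
structure Admissible (e : TriangularCoords R A C M T) : Prop where
  loyal : ∀ (a : A) (c : C), (∀ m : M, a • c • m = 0) → a = 0 ∨ c = 0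
  noncomm_left : ∃ a a' : A, ⁅a, a'⁆ ≠ 0
  noncomm_right : ∃ c c' : C, ⁅c, c'⁆ ≠ 0
  center_left : ∀ a ∈ center A, ∃ t ∈ center T, e.left t = a
  center_right : ∀ c ∈ center C, ∃ t ∈ center T, e.right t = c

namespace Admissible

theorem swap (he : e.Admissible) : e.swap.Admissible where
  loyal c a h := (he.loyal a c fun m => e.smul_smul_comm a c m ▸ h m).symm
  noncomm_left := he.noncomm_right
  noncomm_right := he.noncomm_left
  center_left c hc :=
    let ⟨t, ht, htc⟩ := he.center_right c hc
    ⟨.op t, op_mem_center ht, htc⟩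
  center_right a ha :=
    let ⟨t, ht, hta⟩ := he.center_left a ha
    ⟨.op t, op_mem_center ht, hta⟩

/-- If `a u m` depends on `a` only through an element of `C`, then so does `⁅a, a'⁆ u m`, which
therefore vanishes. -/
theorem eq_zero_of_smul_smul_eq (he : e.Admissible) {u : C} {v : A → C}
    (h : ∀ (a : A) (m : M), a • u • m = v a • m) : u = 0 := by
  obtain ⟨a, a', haa'⟩ := he.noncomm_left
  refine (he.loyal _ u fun m => ?_).resolve_left haa'
  have hswap (b b' : A) : b • b' • u • m = b' • b • u • m := by
    rw [h b' m, e.smul_smul_comm b, ← h b' (b • m), e.smul_smul_comm b]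
  rw [Ring.lie_def, sub_smul, mul_smul, mul_smul, hswap, sub_self]

/-- Polarization turns `E m • m = 0` into `c • E m • p = E (c • m) • p`. -/
theorem eq_zero_of_forall_apply_smul_self (he : e.Admissible) {E : M →ₗ[R] A}
    (h : ∀ m, E m • m = 0) : E = 0 := by
  have hskew (m p : M) : E m • p = -(E p • m) := by
    have hmp := h (m + p)
    simp only [map_add, add_smul, smul_add, h, zero_add, add_zero] at hmp
    exact eq_neg_of_add_eq_zero_right (add_comm (E p • m) _ ▸ hmp)
  refine LinearMap.ext fun m => he.swap.eq_zero_of_smul_smul_eq (v := fun c => E (c • m)) ?_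
  intro c p
  rw [hskew (c • m), e.smul_smul_comm, hskew m, smul_neg]

theorem eq_zero_of_left_mul_eq_zero (he : e.Admissible) {t : T} (ht : t ∈ center T) {a : A}
    (ha : a ≠ 0) (h : e.left t * a = 0) : t = 0 := by
  have hright : e.right t = 0 := (he.loyal a _ fun m => by
    rw [e.smul_smul_comm, ← e.left_smul_eq_right_smul ht, ← mul_smul, h, zero_smul]).resolve_left ha
  refine e.eq_zero_of_mem_center_of_left_eq_zero ht (e.faithful_left _ fun m => ?_)
  rw [left_smul_eq_right_smul ht, hright, zero_smul]

theorem eq_zero_of_left_mul_mem_center (he : e.Admissible) {t : T} (ht : t ∈ center T) {a a' : A}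
    (haa' : ⁅a, a'⁆ ≠ 0) (h : e.left t * a ∈ center A) : t = 0 :=
  he.eq_zero_of_left_mul_eq_zero ht haa' <| by
    rw [← mul_lie_of_mem_center (left_mem_center ht), lie_eq_zero_of_mem_center h]

theorem exists_center_lift (he : e.Admissible) {X : Type*} [AddCommGroup X] [Module R X]
    (φ : X →ₗ[R] A) (hφ : ∀ x, φ x ∈ center A) :
    ∃ ψ : X →ₗ[R] T, (∀ x, ψ x ∈ center T) ∧ ∀ x, e.left (ψ x) = φ x := by
  choose t ht htφ using fun x => he.center_left (φ x) (hφ x)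
  refine ⟨⟨⟨t, fun x y => sub_eq_zero.1 ?_⟩, fun r x => sub_eq_zero.1 ?_⟩, ht, htφ⟩
  · exact e.eq_zero_of_mem_center_of_left_eq_zero (sub_mem (ht _) (add_mem (ht x) (ht y)))
      (by simp [htφ])
  · exact e.eq_zero_of_mem_center_of_left_eq_zero (sub_mem (ht _) (smul_mem_center r (ht x)))
      (by simp [htφ])

theorem exists_center_lift_right (he : e.Admissible) {X : Type*} [AddCommGroup X] [Module R X]
    (φ : X →ₗ[R] C) (hφ : ∀ x, φ x ∈ center C) :
    ∃ ψ : X →ₗ[R] T, (∀ x, ψ x ∈ center T) ∧ ∀ x, e.right (ψ x) = φ x :=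
  let ⟨ψ, hψ, hψφ⟩ := he.swap.exists_center_lift φ hφ
  ⟨(MulOpposite.opLinearEquiv R).symm.toLinearMap ∘ₗ ψ,
    fun x => unop_mem_center (hψ x), hψφ⟩

end Admissible

end TriangularCoords

/-! ### Commuting forms on triangular algebras -/

namespace TriangularCoords

variable {R A C M T : Type*} [CommRing R] [Invertible (2 : R)] [Ring A] [Algebra R A]
  [Ring C] [Algebra R C] [AddCommGroup M] [Module R M] [Module A M] [Module C M]
  [Ring T] [Algebra R T] {e : TriangularCoords R A C M T} (β : CommutingForm R T)

theorem lie_left_cyclic (x y w : T) : ⁅e.left (β x y), e.left w⁆ + ⁅e.left (β y w), e.left x⁆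
    + ⁅e.left (β w x), e.left y⁆ = 0 := by
  simpa using congrArg e.left (β.lie_cyclic x y w)

theorem mid_lie_cyclic (x y w : T) : e.mid ⁅β x y, w⁆ + e.mid ⁅β y w, x⁆
    + e.mid ⁅β w x, y⁆ = 0 := by
  simpa only [map_add, map_zero] using congrArg e.mid (β.lie_cyclic x y w)

theorem mid_apply_inl_inl (a a' : A) : e.mid (β (e.inl a) (e.inl a')) = 0 := by
  have hcyclic (x y w : A) : w • e.mid (β (e.inl x) (e.inl y)) +
      x • e.mid (β (e.inl y) (e.inl w)) + y • e.mid (β (e.inl w) (e.inl x)) = 0 := by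
    have h := e.mid_lie_cyclic β (e.inl x) (e.inl y) (e.inl w)
    simp only [mid_lie_inl] at h
    rw [← neg_eq_zero, ← h]
    abel
  have hone : e.mid (β (e.inl 1) (e.inl 1)) = 0 := by
    simpa using congrArg e.mid (β.lie_self (e.inl 1))
  have hone_apply (x : A) : e.mid (β (e.inl 1) (e.inl x)) = 0 :=
    eq_zero_of_add_self_eq_zero R <| by
      simpa [hone, β.symm (e.inl x)] using hcyclic 1 1 x
  simpa [hone_apply, β.symm _ (e.inl 1)] using hcyclic a a' 1

theorem mid_apply_inl_inr (a : A) (c : C) : e.mid (β (e.inl a) (e.inr c)) = 0 := by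
  have hcyclic (x : A) : e.mid (β (e.inl x) (e.inr c)) = -(x • e.mid (β (e.inl 1) (e.inr c))) := by
    have h := e.mid_lie_cyclic β (e.inl x) (e.inl 1) (e.inr c)
    simp only [mid_lie_inl, mid_lie_inr, mid_apply_inl_inl, smul_zero, one_smul, zero_add] at h
    rw [β.symm]
    linear_combination (norm := abel) -h
  have hone : e.mid (β (e.inl 1) (e.inr c)) = 0 :=
    eq_zero_of_add_self_eq_zero R (eq_neg_iff_add_eq_zero.1 (by simpa using hcyclic 1))
  rw [hcyclic, hone, smul_zero, neg_zero]

theorem mid_apply_inr_inr (c c' : C) : e.mid (β (e.inr c) (e.inr c')) = 0 := by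
  simpa [β.op_apply] using e.swap.mid_apply_inl_inl β.op c c'

theorem right_apply_mem_center {x y : T} (hx : e.right x = 0) (hy : e.right y = 0) :
    e.right (β x y) ∈ center C := by
  refine mem_center_iff.2 fun c => sub_eq_zero.1 ?_
  simpa [hx, hy, Ring.lie_def] using congrArg e.right (β.lie_cyclic x y (e.inr c))

theorem left_apply_mem_center {x y : T} (hx : e.left x = 0) (hy : e.left y = 0) :
    e.left (β x y) ∈ center A :=
  e.swap.right_apply_mem_center β.op (x := .op x) (y := .op y) hx hy

theorem lie_left_apply_inl_one (a : A) : ⁅e.left (β (e.inl a) (e.inl 1)), a⁆ = 0 := by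
  refine eq_zero_of_add_self_eq_zero R ?_
  simpa [Ring.lie_def, β.symm (e.inl 1)] using e.lie_left_cyclic β (e.inl a) (e.inl a) (e.inl 1)

theorem left_apply_inl_one_inl_one_mem_center :
    e.left (β (e.inl 1) (e.inl 1)) ∈ center A :=
  mem_center_of_forall_lie_eq_zero fun a => by
    simpa [Ring.lie_def] using e.lie_left_cyclic β (e.inl 1) (e.inl 1) (e.inl a)

namespace Admissible

theorem exists_commuting_map_mid_inl_inm (he : e.Admissible) :
    ∃ α : A →ₗ[R] A, (∀ a, α a * a = a * α a) ∧
      ∀ a m, e.mid (β (e.inl a) (e.inm m)) = α a • m := by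
  obtain ⟨ψ, hψ, hψβ⟩ := he.exists_center_lift_right
    (e.right ∘ₗ β (e.inl 1) ∘ₗ e.inl)
    fun a => e.right_apply_mem_center β (e.right_inl 1) (e.right_inl a)
  let p : A →ₗ[R] A := e.left ∘ₗ (β (e.inl 1) ∘ₗ e.inl - ψ)
  have hp (a : A) : p a = e.left (β (e.inl 1) (e.inl a)) - e.left (ψ a) :=
    map_sub e.left _ _
  have hp_comm (a : A) : Commute (p a) a := by
    rw [hp, β.symm]
    exact Commute.sub_left (sub_eq_zero.1 (e.lie_left_apply_inl_one β a))
      (commute_of_mem_center (left_mem_center (hψ a)) a)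
  have hp_one : p 1 ∈ center A := hp 1 ▸
    sub_mem (e.left_apply_inl_one_inl_one_mem_center β) (left_mem_center (hψ 1))
  have hp_smul (a : A) (m : M) :
      p a • m = a • e.mid (β (e.inl 1) (e.inm m)) + e.mid (β (e.inl a) (e.inm m)) := by
    have h := e.mid_lie_cyclic β (e.inl 1) (e.inl a) (e.inm m)
    have hψm : e.left (ψ a) • m = e.right (β (e.inl 1) (e.inl a)) • m := by
      rw [e.left_smul_eq_right_smul (hψ a), hψβ]; rfl
    simp only [mid_lie_inl, mid_lie_inm, one_smul, β.symm (e.inm m)] at h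
    rw [hp, sub_smul, hψm]
    linear_combination (norm := abel) h
  have hone_smul (m : M) : e.mid (β (e.inl 1) (e.inm m)) = (⅟2 : R) • p 1 • m := by
    rw [hp_smul, one_smul, ← two_smul R, invOf_smul_smul]
  refine ⟨p - (⅟2 : R) • LinearMap.mulRight R (p 1), fun a => ?_, fun a m => ?_⟩
  · exact (hp_comm a).sub_left
      (((Commute.refl a).mul_left (commute_of_mem_center hp_one a)).smul_left _)
  · rw [LinearMap.sub_apply, sub_smul, hp_smul, hone_smul, e.left_smul_smul]
    simp [e.smul_left_smul, mul_smul]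

theorem exists_reduce_mid_inl_inm_eq_zero (he : e.Admissible) (hA : CommutingMapsProper R A) :
    ∃ (z : T) (hz : z ∈ center T) (μ : T →ₗ[R] T) (hμ : ∀ x, μ x ∈ center T),
      ∀ a m, e.mid (β.reduce hz hμ (e.inl a) (e.inm m)) = 0 := by
  obtain ⟨α, hα, hβα⟩ := he.exists_commuting_map_mid_inl_inm β
  obtain ⟨z, hz, η, hη, hαz⟩ := hA α hα
  obtain ⟨ζ, hζ, hζz⟩ := he.center_left z hz
  obtain ⟨ψ, hψ, hψη⟩ := he.exists_center_lift η hη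
  refine ⟨ζ, hζ, ψ ∘ₗ e.left, fun x => hψ _, fun a m => ?_⟩
  simp [β.reduce_apply, hβα, hαz, hζz, hψη, add_smul, mul_smul]

/-- The maps `a ↦ left (β a c)` are commuting, hence proper, and the cyclic identity on `a`, `m`,
`c` relates them to `α c`. -/
theorem mem_center_of_mid_inr_inm (he : e.Admissible) (hA : CommutingMapsProper R A)
    (hlm : ∀ a m, e.mid (β (e.inl a) (e.inm m)) = 0) {c α : C}
    (hα : ∀ m, e.mid (β (e.inr c) (e.inm m)) = α • m) : α ∈ center C := by
  obtain ⟨z, hz, η, hη, hβz⟩ := hA (e.left ∘ₗ β (e.inr c) ∘ₗ e.inl) fun a => by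
    refine sub_eq_zero.1 (eq_zero_of_add_self_eq_zero R ?_)
    simpa [Ring.lie_def, β.symm (e.inl a) (e.inr c)] using
      e.lie_left_cyclic β (e.inl a) (e.inl a) (e.inr c)
  obtain ⟨t, ht, rfl⟩ := he.center_left z hz
  obtain ⟨ψ, hψ, hψη⟩ := he.exists_center_lift η hη
  suffices h : α - e.right t = 0 from sub_eq_zero.1 h ▸ right_mem_center ht
  refine he.eq_zero_of_smul_smul_eq
    (v := fun a => e.right (ψ a) - e.right (β (e.inr c) (e.inl a))) fun a m => ?_
  have hcyclic := e.mid_lie_cyclic β (e.inl a) (e.inm m) (e.inr c)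
  have hleft : e.left (β (e.inr c) (e.inl a)) = e.left t * a + e.left (ψ a) :=
    (hβz a).trans (by rw [hψη])
  simp only [mid_lie_inl, mid_lie_inm, mid_lie_inr, hlm, β.symm (e.inm m), hα, hleft,
    add_smul, mul_smul, smul_zero, e.left_smul_eq_right_smul ht,
    e.left_smul_eq_right_smul (hψ a)] at hcyclic
  rw [sub_smul, sub_smul, smul_sub, e.smul_smul_comm a (e.right t)]
  linear_combination (norm := abel) -hcyclic

theorem exists_mid_inr_inm_eq (he : e.Admissible) (hA : CommutingMapsProper R A)
    (hlm : ∀ a m, e.mid (β (e.inl a) (e.inm m)) = 0) :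
    ∃ τ : C →ₗ[R] T, (∀ c, τ c ∈ center T) ∧
      ∀ c m, e.mid (β (e.inr c) (e.inm m)) = e.left (τ c) • m := by
  obtain ⟨α, -, hα⟩ := he.swap.exists_commuting_map_mid_inl_inm β.op
  simp only [inl_swap, inm_swap, mid_swap, β.op_apply, MulOpposite.unop_op] at hα
  obtain ⟨τ, hτ, hτα⟩ := he.exists_center_lift_right α
    fun c => he.mem_center_of_mid_inr_inm β hA hlm (hα c)
  exact ⟨τ, hτ, fun c m => by rw [hα, e.left_smul_eq_right_smul (hτ c), hτα]⟩

theorem exists_mid_inm_inm_eq (he : e.Admissible) :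
    ∃ γ : M →ₗ[R] T, (∀ m, γ m ∈ center T) ∧
      ∀ m, e.mid (β (e.inm m) (e.inm m)) = e.left (γ m) • m + e.left (γ m) • m := by
  obtain ⟨κ, hκ, hκβ⟩ := he.exists_center_lift_right (e.right ∘ₗ β (e.inl 1) ∘ₗ e.inm)
    fun m => e.right_apply_mem_center β (e.right_inl 1) (e.right_inm m)
  obtain ⟨ψ, hψ, hψβ⟩ := he.exists_center_lift (e.left ∘ₗ β (e.inl 1) ∘ₗ e.inm)
    fun m => mem_center_of_forall_lie_eq_zero fun a => by
      simpa [Ring.lie_def] using e.lie_left_cyclic β (e.inl 1) (e.inm m) (e.inl a)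
  refine ⟨ψ - κ, fun m => sub_mem (hψ m) (hκ m), fun m => ?_⟩
  have hcyclic := e.mid_lie_cyclic β (e.inm m) (e.inm m) (e.inl 1)
  simp only [mid_lie_inl, mid_lie_inm, one_smul, β.symm (e.inm m) (e.inl 1)] at hcyclic
  rw [LinearMap.sub_apply, map_sub, sub_smul, hψβ, e.left_smul_eq_right_smul (hκ m), hκβ]
  simp only [LinearMap.comp_apply]
  linear_combination (norm := abel) -hcyclic

end Admissible

theorem mid_apply_eq_zero_of_inm (hlm : ∀ a m, e.mid (β (e.inl a) (e.inm m)) = 0)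
    (hrm : ∀ c m, e.mid (β (e.inr c) (e.inm m)) = 0)
    (hmm : ∀ m, e.mid (β (e.inm m) (e.inm m)) = 0) (x y : T) : e.mid (β x y) = 0 := by
  have hmm' (m p : M) : e.mid (β (e.inm m) (e.inm p)) = 0 := by
    refine eq_zero_of_add_self_eq_zero R ?_
    simpa [hmm, β.symm (e.inm p) (e.inm m)] using hmm (m + p)
  rw [e.eq_inl_add_inm_add_inr x, e.eq_inl_add_inm_add_inr y]
  simp [hlm, hrm, hmm', β.symm (e.inm _) (e.inl _), β.symm (e.inm _) (e.inr _),
    β.symm (e.inr _) (e.inl _), mid_apply_inl_inl, mid_apply_inl_inr, mid_apply_inr_inr]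

namespace Admissible

theorem exists_reduce_mid_eq_zero (he : e.Admissible) (hA : CommutingMapsProper R A)
    (hlm : ∀ a m, e.mid (β (e.inl a) (e.inm m)) = 0) :
    ∃ (z : T) (hz : z ∈ center T) (μ : T →ₗ[R] T) (hμ : ∀ x, μ x ∈ center T),
      ∀ x y, e.mid (β.reduce hz hμ x y) = 0 := by
  obtain ⟨τ, hτ, hβτ⟩ := he.exists_mid_inr_inm_eq β hA hlm
  obtain ⟨γ, hγ, hβγ⟩ := he.exists_mid_inm_inm_eq β
  refine ⟨0, zero_mem _, τ ∘ₗ e.right + γ ∘ₗ e.mid, fun x => add_mem (hτ _) (hγ _), ?_⟩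
  refine e.mid_apply_eq_zero_of_inm _ (fun a m => ?_) (fun c m => ?_) (fun m => ?_)
  · simp [β.reduce_apply, hlm, e.mid_eq_zero_of_mem_center (hγ m)]
  · simp [β.reduce_apply, hβτ, e.mid_eq_zero_of_mem_center (hγ m)]
  · simp [β.reduce_apply, hβγ]

end Admissible

section Flat

variable {β} (hβ : ∀ x y, e.mid (β x y) = 0)

include hβ

theorem apply_mem_center_of_mid_eq_zero {x y : T} (hx : e.mid x = 0) (hy : e.mid y = 0) :
    β x y ∈ center T := by
  refine e.mem_center_of_smul_eq (hβ x y) fun m => sub_eq_zero.1 ?_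
  simpa [hβ, hx, hy] using e.mid_lie_cyclic β x y (e.inm m)

namespace Admissible

variable (he : e.Admissible)

include he

theorem exists_apply_inm_sub_inl_mem_center {x : T} (hx : e.right x = 0) :
    ∃ D : M →ₗ[R] A, ∀ m, β x (e.inm m) - e.inl (D m) ∈ center T := by
  obtain ⟨ψ, hψ, hψβ⟩ := he.exists_center_lift_right (e.right ∘ₗ β x ∘ₗ e.inm)
    fun m => e.right_apply_mem_center β hx (e.right_inm m)
  refine ⟨e.left ∘ₗ (β x ∘ₗ e.inm - ψ), fun m => ?_⟩
  convert hψ m using 1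
  apply e.ext <;> simp [hβ, hψβ, e.mid_eq_zero_of_mem_center (hψ m)]

theorem apply_inl_inm_mem_center (a : A) (m : M) : β (e.inl a) (e.inm m) ∈ center T := by
  obtain ⟨D, hD⟩ := he.exists_apply_inm_sub_inl_mem_center hβ (e.right_inl a)
  suffices D = 0 by simpa [this] using hD m
  refine he.eq_zero_of_forall_apply_smul_self fun p => eq_zero_of_add_self_eq_zero R ?_
  have hcyclic := e.mid_lie_cyclic β (e.inm p) (e.inm p) (e.inl a)
  rwa [mid_lie_inl, hβ, smul_zero, neg_zero, zero_add, β.symm (e.inm p),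
    mid_lie_inm_of_sub_inl_mem_center (hD p)] at hcyclic

/-- The family `D` comparing `β q p` with the upper corner turns out to be `A`-linear in `q`, so a
central value `D q p` has only central multiples. -/
theorem apply_inm_inm_mem_center (q p : M) : β (e.inm q) (e.inm p) ∈ center T := by
  choose D hD using fun q => he.exists_apply_inm_sub_inl_mem_center hβ (e.right_inm q)
  have hDcenter (q p : M) : D q p ∈ center A := by
    have h := sub_mem (e.left_apply_mem_center β (e.left_inm q) (e.left_inm p))
      (e.left_mem_center (hD q p))
    rwa [map_sub, left_inl, sub_sub_cancel] at h
  have hcyclic (q p : M) : D p p • q + D q p • p + D q p • p = 0 := by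
    have h := e.mid_lie_cyclic β (e.inm p) (e.inm p) (e.inm q)
    rwa [β.symm (e.inm p) (e.inm q), mid_lie_inm_of_sub_inl_mem_center (hD p p),
      mid_lie_inm_of_sub_inl_mem_center (hD q p)] at h
  have hDsmul (a : A) : D (a • q) = LinearMap.mulLeft R a ∘ₗ D q := by
    refine sub_eq_zero.1 (he.eq_zero_of_forall_apply_smul_self fun p =>
      eq_zero_of_add_self_eq_zero R ?_)
    have haq := hcyclic (a • q) p
    have hq := congrArg (a • ·) (hcyclic q p)
    simp only [smul_add, smul_zero, ← mul_smul, mem_center_iff.1 (hDcenter p p) a] at haq hq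
    simp only [LinearMap.sub_apply, LinearMap.comp_apply, LinearMap.mulLeft_apply, sub_smul]
    linear_combination (norm := abel) haq - hq
  obtain ⟨t, ht, htD⟩ := he.center_left _ (hDcenter q p)
  obtain ⟨a, a', haa'⟩ := he.noncomm_left
  have htzero : t = 0 := he.eq_zero_of_left_mul_mem_center ht haa' <| by
    have h := hDcenter (a • q) p
    rwa [hDsmul, LinearMap.comp_apply, LinearMap.mulLeft_apply,
      mem_center_iff.1 (hDcenter q p), ← htD] at h
  simpa [← htD, htzero] using hD q p

theorem apply_mem_center (x y : T) : β x y ∈ center T := by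
  have hrm (c : C) (m : M) : β (e.inr c) (e.inm m) ∈ center T := by
    simpa [β.op_apply] using unop_mem_center
      (he.swap.apply_inl_inm_mem_center (β := β.op) (fun x y => hβ x.unop y.unop) c m)
  have hxm (x : T) (m : M) : β x (e.inm m) ∈ center T := by
    rw [e.eq_inl_add_inm_add_inr x, β.add_left, β.add_left]
    exact add_mem (add_mem (he.apply_inl_inm_mem_center hβ _ m)
      (he.apply_inm_inm_mem_center hβ _ m)) (hrm _ m)
  have hdiag : β (x - e.inm (e.mid x)) (y - e.inm (e.mid y)) ∈ center T :=
    e.apply_mem_center_of_mid_eq_zero hβ (by simp) (by simp)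
  have hsplit : β x y = β (x - e.inm (e.mid x)) (y - e.inm (e.mid y))
      + β y (e.inm (e.mid x)) + β (x - e.inm (e.mid x)) (e.inm (e.mid y)) := by
    simp only [β.symm y, map_sub, LinearMap.sub_apply]
    abel
  exact hsplit ▸ add_mem (add_mem hdiag (hxm _ _)) (hxm _ _)

end Admissible

end Flat

namespace Admissible

theorem commutingForm_isProper (he : e.Admissible) (hA : CommutingMapsProper R A) :
    β.IsProper := by
  obtain ⟨_, _, _, _, hlm⟩ := he.exists_reduce_mid_inl_inm_eq_zero β hA
  obtain ⟨_, _, _, _, hmid⟩ := he.exists_reduce_mid_eq_zero _ hA hlm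
  exact .of_reduce (.of_reduce (.of_forall_mem_center (he.apply_mem_center hmid)))

theorem commutingForm_isProper_right (he : e.Admissible) (hC : CommutingMapsProper R C) :
    β.IsProper :=
  .of_op (he.swap.commutingForm_isProper β.op hC)

end Admissible

end TriangularCoords

/-- The properties of the target algebra that make central coefficients unique: its center is a
domain, and suitable elements are linearly independent over the center modulo the center. -/
structure CentrallyIndependent (T : Type*) [Ring T] : Prop where
  eq_zero_or_eq_zero : ∀ z ∈ center T, ∀ w ∈ center T, z * w = 0 → z = 0 ∨ w = 0
  exists_indep : ∃ p q : T, ∀ c ∈ center T, ∀ d ∈ center T,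
    c * p + d * q ∈ center T → c = 0 ∧ d = 0
  exists_lie_lie_indep : ∃ p q : T, ∀ t ∈ center T,
    (∀ w : T, ∃ c ∈ center T, ∃ d ∈ center T, t * ⁅w, ⁅p, q⁆⁆ + c * p + d * q ∈ center T) → t = 0

theorem TriangularCoords.Admissible.centrallyIndependent {R A C M T : Type*} [CommRing R] [Ring A]
    [Algebra R A] [Ring C] [Algebra R C] [AddCommGroup M] [Module R M] [Module A M] [Module C M]
    [Ring T] [Algebra R T] {e : TriangularCoords R A C M T} (he : e.Admissible) :
    CentrallyIndependent T where
  eq_zero_or_eq_zero z hz w hw hzw := by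
    refine or_iff_not_imp_right.2 fun hw0 => he.eq_zero_of_left_mul_eq_zero hz
      (mt (e.eq_zero_of_mem_center_of_left_eq_zero hw) hw0) ?_
    rw [← e.left_mul, hzw, map_zero]
  exists_indep := by
    obtain ⟨a, a', haa'⟩ := he.noncomm_left
    obtain ⟨b, b', hbb'⟩ := he.noncomm_right
    refine ⟨e.inl a, e.inr b, fun c hc d hd h => ⟨?_, ?_⟩⟩
    · exact he.eq_zero_of_left_mul_mem_center hc haa' (by simpa using e.left_mem_center h)
    · refine MulOpposite.op_injective
        (he.swap.eq_zero_of_left_mul_mem_center (op_mem_center hd) hbb' ?_)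
      simpa [mem_center_iff.1 (e.right_mem_center hd)] using e.right_mem_center h
  exists_lie_lie_indep := by
    obtain ⟨a, a', haa'⟩ := he.noncomm_left
    refine ⟨e.inl a, e.inl a', fun t ht h => he.eq_zero_of_left_mul_eq_zero ht haa' ?_⟩
    refine e.faithful_left _ fun m => ?_
    obtain ⟨c, hc, d, hd, hcd⟩ := h (e.inm m)
    simpa [e.mid_eq_zero_of_mem_center hc, e.mid_eq_zero_of_mem_center hd,
      e.mid_eq_zero_of_mem_center ht, mul_smul, Ring.lie_def] using e.mid_eq_zero_of_mem_center hcd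

namespace TriangularCoords

variable {R A C M T : Type*} [CommRing R] [Ring A] [Algebra R A] [Ring C] [Algebra R C]
  [AddCommGroup M] [Module R M] [Module A M] [Module C M] [Ring T] [Algebra R T]
  (e : TriangularCoords R A C M T)

include e

theorem eq_zero_of_forall_mul_mem_center {x : T} (h : ∀ y, x * y ∈ center T) : x = 0 := by
  refine e.eq_zero_of_mem_center_of_left_eq_zero (by simpa using h 1)
    (e.faithful_left _ fun m => ?_)
  simpa using e.mid_eq_zero_of_mem_center (h (e.inm m))

theorem exists_lie_sq_lie_ne_zero_of_left [Invertible (2 : R)] (h : ∃ a a' : A, ⁅a, a'⁆ ≠ 0) :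
    ∃ x y : T, ⁅⁅y * y, x⁆, ⁅y, x⁆⁆ ≠ 0 := by
  contrapose! h
  intro a a'
  have hcube (b : A) : b * ⁅b, a'⁆ * b = 0 := e.faithful_left _ fun m => by
    have hm := congrArg e.mid (h (e.inl a' + e.inm m) (e.inl b))
    simp only [mid_lie, left_lie, left_mul, mid_mul, right_lie, right_mul, map_add, left_inl,
      left_inm, mid_inl, mid_inm, right_inl, right_inm, add_zero, zero_add, zero_mul, smul_zero,
      map_zero] at hm
    simp only [Ring.lie_def, mul_zero, sub_zero, zero_smul, add_zero, ← mul_smul] at hm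
    rw [← hm, ← sub_smul, Ring.lie_def]
    congr 1
    noncomm_ring
  refine eq_zero_of_add_self_eq_zero R ?_
  have h1 := hcube (a + 1)
  have h2 := hcube (a - 1)
  have h3 := hcube a
  simp only [Ring.lie_def] at *
  linear_combination (norm := noncomm_ring) h1 + h2 - 2 * h3

theorem exists_lie_sq_lie_ne_zero [Invertible (2 : R)]
    (h : (∃ a a' : A, ⁅a, a'⁆ ≠ 0) ∨ ∃ c c' : C, ⁅c, c'⁆ ≠ 0) :
    ∃ x y : T, ⁅⁅y * y, x⁆, ⁅y, x⁆⁆ ≠ 0 := by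
  refine h.elim e.exists_lie_sq_lie_ne_zero_of_left fun hC => ?_
  obtain ⟨x, y, hxy⟩ := e.swap.exists_lie_sq_lie_ne_zero_of_left hC
  refine ⟨x.unop, y.unop, fun h0 => hxy (MulOpposite.unop_injective ?_)⟩
  simp only [Ring.lie_def, MulOpposite.unop_sub, MulOpposite.unop_mul,
    MulOpposite.unop_zero] at h0 ⊢
  linear_combination (norm := noncomm_ring) -h0

end TriangularCoords

/-! ### Lie isomorphisms -/

section LieIsomorphism

variable {R T T' : Type*} [CommRing R] [Ring T] [Algebra R T] [Ring T'] [Algebra R T']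

theorem lie_mul_add_mul_add {z z' k k' : T} (hz : z ∈ center T) (hz' : z' ∈ center T)
    (hk : k ∈ center T) (hk' : k' ∈ center T) (x y : T) :
    ⁅z * x + k, z' * y + k'⁆ = z * z' * ⁅x, y⁆ := by
  simp only [Ring.lie_def]
  linear_combination (norm := noncomm_ring)
    mem_center_iff.1 hk' (z * x + k) - mem_center_iff.1 hk (z' * y) + z * mem_center_iff.1 hz' x * y
      - mem_center_iff.1 hz z' * (y * x) - z' * mem_center_iff.1 hz y * x

/-- The failure of `φ` to be a Jordan homomorphism. -/
def jordanDefect (φ : T →ₗ[R] T') (x y : T) : T' :=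
  φ (x * y + y * x) - (φ x * φ y + φ y * φ x)

theorem jordanDefect_mem_center {φ : T →ₗ[R] T'} (h : ∀ x, φ (x * x) - φ x * φ x ∈ center T')
    (x y : T) : jordanDefect φ x y ∈ center T' := by
  convert sub_mem (sub_mem (h (x + y)) (h x)) (h y) using 1
  simp only [jordanDefect, map_add, mul_add, add_mul]
  abel

/-- `⁅w, ⁅x, y⁆⁆ = (x ∘ w) ∘ y - (w ∘ y) ∘ x` for the Jordan product `a ∘ b = a b + b a`. -/
theorem map_lie_lie_sub_mem_center {φ : T →ₗ[R] T'} (h : ∀ x y, jordanDefect φ x y ∈ center T')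
    (w x y : T) :
    φ ⁅w, ⁅x, y⁆⁆ - ⁅φ w, ⁅φ x, φ y⁆⁆
      - 2 * (jordanDefect φ x w * φ y - jordanDefect φ w y * φ x) ∈ center T' := by
  convert sub_mem (h (x * w + w * x) y) (h (w * y + y * w) x) using 1
  have hxw := mem_center_iff.1 (h x w) (φ y)
  have hwy := mem_center_iff.1 (h w y) (φ x)
  have htriple : φ ⁅w, ⁅x, y⁆⁆ = φ ((x * w + w * x) * y + y * (x * w + w * x))
      - φ ((w * y + y * w) * x + x * (w * y + y * w)) := by
    rw [← map_sub, Ring.lie_def, Ring.lie_def]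
    congr 1
    noncomm_ring
  simp only [jordanDefect, Ring.lie_def] at hxw hwy htriple ⊢
  linear_combination (norm := noncomm_ring) htriple + hxw - hwy

/-- The defect `d x y = φ (x y) - φ x φ y` is central, and associativity gives
`d x w * φ y - d w y * φ x ∈ center T'`. -/
theorem map_mul_of_map_lie_sub_mem_center [Invertible (2 : R)] (hT' : CentrallyIndependent T')
    {φ : T →ₗ[R] T'} (hjordan : ∀ x y, jordanDefect φ x y ∈ center T')
    (hlie : ∀ x y, φ ⁅x, y⁆ - ⁅φ x, φ y⁆ ∈ center T')
    (hsurj : ∀ t, ∃ x, φ x - t ∈ center T') (x y : T) : φ (x * y) = φ x * φ y := by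
  have hcentral (x y : T) : φ (x * y) - φ x * φ y ∈ center T' := by
    refine mem_center_of_add_self_mem R ?_
    convert add_mem (hjordan x y) (hlie x y) using 1
    simp only [jordanDefect, Ring.lie_def, map_add, map_sub]
    abel
  have hcocycle (x w y : T) : (φ (x * w) - φ x * φ w) * φ y - (φ (w * y) - φ w * φ y) * φ x ∈
      center T' := by
    convert sub_mem (hcentral x (w * y)) (hcentral (x * w) y) using 1
    rw [← mem_center_iff.1 (hcentral w y), mul_assoc x]
    noncomm_ring
  obtain ⟨p, q, hpq⟩ := hT'.exists_indep
  obtain ⟨x₀, hx₀⟩ := hsurj p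
  obtain ⟨y₀, hy₀⟩ := hsurj q
  have hright (w : T) : φ (w * y₀) - φ w * φ y₀ = 0 := by
    refine neg_eq_zero.1 (hpq _ (neg_mem (hcentral w y₀)) _ (hcentral x₀ w) ?_).1
    convert add_mem (sub_mem (hcocycle x₀ w y₀) (mul_mem (hcentral x₀ w) hy₀))
      (mul_mem (hcentral w y₀) hx₀) using 1
    noncomm_ring
  refine sub_eq_zero.1 (hpq 0 (zero_mem _) _ (hcentral x y) ?_).2
  convert sub_mem (hcocycle x y y₀) (mul_mem (hcentral x y) hy₀) using 1
  rw [hright]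
  noncomm_ring

theorem map_mul_rev_of_map_lie_add_mem_center [Invertible (2 : R)] (hT' : CentrallyIndependent T')
    {φ : T →ₗ[R] T'} (hjordan : ∀ x y, jordanDefect φ x y ∈ center T')
    (hlie : ∀ x y, φ ⁅x, y⁆ + ⁅φ x, φ y⁆ ∈ center T')
    (hsurj : ∀ t, ∃ x, φ x - t ∈ center T') (x y : T) : φ (x * y) = φ y * φ x := by
  refine map_mul_of_map_lie_sub_mem_center hT'
    (φ := φ ∘ₗ (MulOpposite.opLinearEquiv R).symm.toLinearMap) (fun x y => ?_) (fun x y => ?_)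
    (fun t => (hsurj t).imp' .op fun _ => id) (.op y) (.op x)
  · simpa [jordanDefect, add_comm] using hjordan x.unop y.unop
  · convert hlie y.unop x.unop using 1
    simp only [Ring.lie_def, LinearMap.coe_comp, LinearEquiv.coe_coe, Function.comp_apply,
      MulOpposite.coe_opLinearEquiv_symm, MulOpposite.unop_sub, MulOpposite.unop_mul]
    abel

/-- The Jordan product of `T`, transported to `T'` along a Lie isomorphism. -/
def jordanForm (l : T ≃ₗ[R] T') (hl : ∀ x y, l ⁅x, y⁆ = ⁅l x, l y⁆) : CommutingForm R T' where
  toBilin := LinearMap.mk₂ R (fun x y => l (l.symm x * l.symm y + l.symm y * l.symm x))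
    (fun x x' y => by rw [← map_add, map_add l.symm]; congr 1; noncomm_ring)
    (fun r x y => by simp [smul_add])
    (fun x y y' => by rw [← map_add, map_add l.symm]; congr 1; noncomm_ring)
    (fun r x y => by simp [smul_add])
  symm' x y := congrArg l (add_comm _ _)
  lie_self' x := by
    obtain ⟨u, rfl⟩ := l.surjective x
    rw [LinearMap.mk₂_apply, l.symm_apply_apply, ← hl, Ring.lie_def, add_mul, mul_add, mul_assoc,
      sub_self, map_zero]

variable {l : T ≃ₗ[R] T'}

theorem exists_map_sq_sub_mem_center [Invertible (2 : R)]
    {hl : ∀ x y, l ⁅x, y⁆ = ⁅l x, l y⁆} (h : (jordanForm l hl).IsProper) :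
    ∃ z ∈ center T', ∃ κ : T →ₗ[R] T', (∀ x, κ x ∈ center T') ∧
      ∀ x, l (x * x) - (z * (l x * l x) + 2 * κ x * l x) ∈ center T' := by
  obtain ⟨z, hz, μ, hμ, h⟩ := h
  refine ⟨⅟(2 : R) • z, smul_mem_center _ hz, (⅟(2 : R) * ⅟(2 : R)) • μ ∘ₗ l.toLinearMap,
    fun x => smul_mem_center _ (hμ _), fun x => ?_⟩
  convert smul_mem_center (⅟(2 : R)) (h (l x)) using 1
  have hsq : jordanForm l hl (l x) (l x) = (2 : R) • l (x * x) := by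
    simp [jordanForm, two_smul]
  have htwo (t : T') : 2 * ((⅟(2 : R) * ⅟(2 : R)) • t) = ⅟(2 : R) • t := by
    rw [two_mul, ← two_smul R, smul_smul, mul_invOf_cancel_left']
  rw [hsq, smul_sub, invOf_smul_smul, smul_add, smul_mul_assoc, LinearMap.smul_apply, htwo,
    smul_mul_assoc]
  rfl

theorem mem_center_of_map_mem_center (hl : ∀ x y, l ⁅x, y⁆ = ⁅l x, l y⁆) {x : T}
    (hx : l x ∈ center T') : x ∈ center T :=
  mem_center_of_forall_lie_eq_zero fun y =>
    l.injective (by rw [hl, lie_eq_zero_of_mem_center hx, map_zero])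

theorem map_mem_center (hl : ∀ x y, l ⁅x, y⁆ = ⁅l x, l y⁆) {x : T}
    (hx : x ∈ center T) : l x ∈ center T' :=
  mem_center_of_forall_lie_eq_zero fun t => by
    rw [← l.apply_symm_apply t, ← hl, lie_eq_zero_of_mem_center hx, map_zero]

section Twist

/-- The map `x ↦ z * l x + κ x`; completing the square makes it compatible with squares modulo the
center. -/
def centralTwist (l : T ≃ₗ[R] T') (z : T') (κ : T →ₗ[R] T') : T →ₗ[R] T' :=
  LinearMap.mulLeft R z ∘ₗ l.toLinearMap + κ

variable {z : T'} (hz : z ∈ center T') {κ : T →ₗ[R] T'} (hκ : ∀ x, κ x ∈ center T')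

theorem centralTwist_apply (x : T) : centralTwist l z κ x = z * l x + κ x := rfl

include hz hκ

theorem centralTwist_sq_sub_mem_center
    (hsq : ∀ x, l (x * x) - (z * (l x * l x) + 2 * κ x * l x) ∈ center T') (x : T) :
    centralTwist l z κ (x * x) - centralTwist l z κ x * centralTwist l z κ x ∈ center T' := by
  convert add_mem (mul_mem hz (hsq x)) (sub_mem (hκ (x * x)) (mul_mem (hκ x) (hκ x))) using 1
  simp only [centralTwist_apply]
  linear_combination (norm := noncomm_ring) -z * mem_center_iff.1 hz (l x) * l x
    - z * mem_center_iff.1 (hκ x) (l x) + mem_center_iff.1 (hκ x) z * l x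

theorem lie_centralTwist (x y : T) :
    ⁅centralTwist l z κ x, centralTwist l z κ y⁆ = z * z * ⁅l x, l y⁆ := by
  rw [centralTwist_apply, centralTwist_apply, lie_mul_add_mul_add hz hz (hκ x) (hκ y)]

theorem mul_mul_self_eq_of_jordanDefect_mem_center (hl : ∀ x y, l ⁅x, y⁆ = ⁅l x, l y⁆)
    (hT' : CentrallyIndependent T')
    (hjordan : ∀ x y, jordanDefect (centralTwist l z κ) x y ∈ center T') : z * z * z = z := by
  obtain ⟨p, q, hpq⟩ := hT'.exists_lie_lie_indep
  have hz2 := mul_mem hz hz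
  refine (sub_eq_zero.1 (hpq _ (sub_mem hz (mul_mem hz2 hz)) fun t => ?_)).symm
  obtain ⟨x, rfl⟩ := l.surjective p
  obtain ⟨y, rfl⟩ := l.surjective q
  obtain ⟨w, rfl⟩ := l.surjective t
  set jd := jordanDefect (centralTwist l z κ) with hjd
  refine ⟨2 * jd w y * z, mul_mem (mul_mem (ofNat_mem _ 2) (hjordan w y)) hz,
    -(2 * jd x w * z), neg_mem (mul_mem (mul_mem (ofNat_mem _ 2) (hjordan x w)) hz), ?_⟩
  have hcube : ⁅centralTwist l z κ w, ⁅centralTwist l z κ x, centralTwist l z κ y⁆⁆ =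
      z * z * z * ⁅l w, ⁅l x, l y⁆⁆ := by
    have hlie := lie_mul_add_mul_add hz hz2 (hκ w) (zero_mem _) (l w) ⁅l x, l y⁆
    rw [lie_centralTwist hz hκ, centralTwist_apply, ← add_zero (z * z * ⁅l x, l y⁆), hlie,
      ← mul_assoc z]
  have h := map_lie_lie_sub_mem_center hjordan w x y
  rw [hcube, ← hjd] at h
  convert sub_mem (add_mem h (mul_mem (ofNat_mem _ 2) (sub_mem (mul_mem (hjordan x w) (hκ y))
    (mul_mem (hjordan w y) (hκ x))))) (hκ ⁅w, ⁅x, y⁆⁆) using 1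
  simp only [centralTwist_apply, hl]
  noncomm_ring

omit hz in
/-- If `z = 0`, then `l (y²)` is a central multiple of `l y` modulo the center. -/
theorem ne_zero_of_map_sq_sub_mem_center (hl : ∀ x y, l ⁅x, y⁆ = ⁅l x, l y⁆)
    (hsq : ∀ x, l (x * x) - (z * (l x * l x) + 2 * κ x * l x) ∈ center T')
    (hT : ∃ x y : T, ⁅⁅y * y, x⁆, ⁅y, x⁆⁆ ≠ 0) : z ≠ 0 := by
  rintro rfl
  obtain ⟨x, y, hxy⟩ := hT
  refine hxy (l.injective ?_)
  have hκy : 2 * κ y ∈ center T' := mul_mem (ofNat_mem _ 2) (hκ y)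
  have hlsq : l (y * y) = 2 * κ y * l y + (l (y * y) - (0 * (l y * l y) + 2 * κ y * l y)) := by
    noncomm_ring
  have hlie := lie_mul_add_mul_add hκy (one_mem _) (hsq y) (zero_mem _) (l y) (l x)
  rw [← hlsq, one_mul, add_zero, mul_one] at hlie
  rw [hl, hl, hl, hlie, mul_lie_of_mem_center hκy, (Commute.refl _).lie_eq, mul_zero, map_zero]

end Twist

theorem eq_one_or_eq_neg_one_of_mul_mul_self (hT' : CentrallyIndependent T') {z : T'}
    (hz : z ∈ center T') (hz0 : z ≠ 0) (h : z * z * z = z) : z = 1 ∨ z = -1 := by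
  have hfactor : z * ((z - 1) * (z + 1)) = 0 := by
    linear_combination (norm := noncomm_ring) h
  have h1 := sub_mem hz (one_mem _)
  have h2 := add_mem hz (one_mem _)
  refine Or.imp sub_eq_zero.1 eq_neg_of_add_eq_zero_left (hT'.eq_zero_or_eq_zero _ h1 _ h2 ?_)
  exact (hT'.eq_zero_or_eq_zero _ hz _ (mul_mem h1 h2) hfactor).resolve_left hz0

theorem exists_sub_mem_center_and_map_mul [Invertible (2 : R)] (hT' : CentrallyIndependent T')
    (hT : ∃ x y : T, ⁅⁅y * y, x⁆, ⁅y, x⁆⁆ ≠ 0) {hl : ∀ x y, l ⁅x, y⁆ = ⁅l x, l y⁆}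
    (h : (jordanForm l hl).IsProper) :
    ∃ m : T →ₗ[R] T', (∀ x, l x - m x ∈ center T') ∧
      ((∀ x y, m (x * y) = m x * m y) ∨ ∀ x y, m (x * y) = -(m y * m x)) := by
  obtain ⟨z, hz, κ, hκ, hsq⟩ := exists_map_sq_sub_mem_center h
  have hjordan := jordanDefect_mem_center (centralTwist_sq_sub_mem_center hz hκ hsq)
  have hz1 : z = 1 ∨ z = -1 := eq_one_or_eq_neg_one_of_mul_mul_self hT' hz
    (ne_zero_of_map_sq_sub_mem_center hκ hl hsq hT)
    (mul_mul_self_eq_of_jordanDefect_mem_center hz hκ hl hT' hjordan)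
  have hzz : z * z = 1 := by rcases hz1 with rfl | rfl <;> simp
  have hlie (x y : T) : ⁅centralTwist l z κ x, centralTwist l z κ y⁆ = l ⁅x, y⁆ := by
    rw [lie_centralTwist hz hκ, hzz, one_mul, hl]
  have hsurj (t : T') : ∃ x, centralTwist l z κ x - t ∈ center T' :=
    ⟨l.symm (z * t), by simpa [centralTwist_apply, ← mul_assoc, hzz] using hκ _⟩
  rcases hz1 with rfl | rfl
  · refine ⟨centralTwist l 1 κ, fun x => ?_, .inl <|
      map_mul_of_map_lie_sub_mem_center hT' hjordan (fun x y => ?_) hsurj⟩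
    · simpa [centralTwist_apply] using hκ x
    · rw [hlie]
      simpa [centralTwist_apply] using hκ ⁅x, y⁆
  · refine ⟨-centralTwist l (-1) κ, fun x => ?_, .inr fun x y => ?_⟩
    · simpa [centralTwist_apply] using hκ x
    · have hrev := map_mul_rev_of_map_lie_add_mem_center hT' hjordan
        (fun x y => by rw [hlie]; simpa [centralTwist_apply] using hκ ⁅x, y⁆) hsurj x y
      rw [LinearMap.neg_apply, LinearMap.neg_apply, LinearMap.neg_apply, neg_mul_neg, hrev]

section Consequences

variable {m : T →ₗ[R] T'} (hlm : ∀ x, l x - m x ∈ center T')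
  (hm : (∀ x y, m (x * y) = m x * m y) ∨ ∀ x y, m (x * y) = -(m y * m x))

include hm in
theorem map_lie_of_map_mul (x y : T) : m ⁅x, y⁆ = ⁅m x, m y⁆ := by
  rcases hm with hm | hm <;> simp only [Ring.lie_def, map_sub, hm]
  abel

include hlm in
theorem lie_eq_lie_of_sub_mem_center (x y : T) : ⁅l x, l y⁆ = ⁅m x, m y⁆ := by
  have h := lie_mul_add_mul_add (one_mem _) (one_mem _) (hlm x) (hlm y) (m x) (m y)
  simpa only [one_mul, add_sub_cancel] using h

include hlm hm in
theorem injective_of_sub_mem_center (hl : ∀ x y, l ⁅x, y⁆ = ⁅l x, l y⁆)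
    (hT : ∀ x : T, (∀ y, x * y ∈ center T) → x = 0) : Function.Injective m := by
  refine (injective_iff_map_eq_zero m).2 fun x hx => hT x fun y => ?_
  have hxy : m (x * y) = 0 := by rcases hm with hm | hm <;> simp [hm, hx]
  exact mem_center_of_map_mem_center hl (by simpa [hxy] using hlm (x * y))

include hlm hm in
theorem exists_map_eq_one (hl : ∀ x y, l ⁅x, y⁆ = ⁅l x, l y⁆) (hT' : CentrallyIndependent T')
    (hinj : Function.Injective m) : ∃ u, m u = 1 := by
  rcases eq_or_ne (m 1) 0 with h0 | h0
  · have : Subsingleton T := subsingleton_of_zero_eq_one (hinj (by rw [h0, map_zero]))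
    have := l.symm.injective.subsingleton
    exact ⟨0, Subsingleton.elim _ _⟩
  have h1 : m 1 ∈ center T' := by
    simpa using sub_mem (map_mem_center hl (one_mem _)) (hlm 1)
  rcases hm with hm | hm
  · refine ⟨1, sub_eq_zero.1 ?_⟩
    refine (hT'.eq_zero_or_eq_zero _ h1 _ (sub_mem h1 (one_mem _)) ?_).resolve_left h0
    rw [mul_sub, ← hm, mul_one, mul_one, sub_self]
  · refine ⟨-1, ?_⟩
    rw [map_neg, neg_eq_iff_add_eq_zero]
    refine (hT'.eq_zero_or_eq_zero _ h1 _ (add_mem h1 (one_mem _)) ?_).resolve_left h0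
    rw [mul_add, mul_one, ← neg_eq_iff_add_eq_zero, ← hm, mul_one]

include hlm in
theorem surjective_of_exists_map_eq_one (h1 : ∃ u, m u = 1)
    (hcenter : (center T' : Set T') = Set.range (algebraMap R T')) : Function.Surjective m := by
  intro t
  obtain ⟨u, hu⟩ := h1
  obtain ⟨r, hr⟩ : l (l.symm t) - m (l.symm t) ∈ Set.range (algebraMap R T') := hcenter ▸ hlm _
  refine ⟨l.symm t + r • u, ?_⟩
  rw [map_add, map_smul, hu, ← Algebra.algebraMap_eq_smul_one, hr, l.apply_symm_apply,
    add_sub_cancel]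

end Consequences

theorem exists_eq_add_of_jordanForm_isProper [Invertible (2 : R)] (hT' : CentrallyIndependent T')
    (hT : ∃ x y : T, ⁅⁅y * y, x⁆, ⁅y, x⁆⁆ ≠ 0)
    (hT0 : ∀ x : T, (∀ y, x * y ∈ center T) → x = 0) {hl : ∀ x y, l ⁅x, y⁆ = ⁅l x, l y⁆}
    (h : (jordanForm l hl).IsProper) :
    ∃ m : T →ₗ[R] T', ∃ n : T →ₗ[R] T', (∀ x, l x = m x + n x) ∧ Function.Injective m ∧
      ((∀ x y, m (x * y) = m x * m y) ∨ ∀ x y, m (x * y) = -(m y * m x)) ∧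
      (∀ x, n x ∈ center T') ∧ (∀ x y : T, n ⁅x, y⁆ = 0) ∧
      ((center T' : Set T') = Set.range (algebraMap R T') → Function.Surjective m) := by
  obtain ⟨m, hlm, hm⟩ := exists_sub_mem_center_and_map_mul hT' hT h
  have hinj := injective_of_sub_mem_center hlm hm hl hT0
  refine ⟨m, l.toLinearMap - m, fun x => (add_sub_cancel _ _).symm, hinj, hm, hlm, fun x y => ?_,
    surjective_of_exists_map_eq_one hlm (exists_map_eq_one hlm hm hl hT' hinj)⟩
  rw [LinearMap.sub_apply, map_lie_of_map_mul hm, ← lie_eq_lie_of_sub_mem_center hlm, sub_eq_zero]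
  exact hl x y

end LieIsomorphism

section Noncommutative

variable {A : Type*} [Ring A]

theorem exists_mul_ne_of_center_ne_univ (h : (center A : Set A) ≠ Set.univ) :
    ∃ a a' : A, a * a' ≠ a' * a := by
  contrapose! h
  exact Set.eq_univ_of_forall fun z => mem_center_iff.2 fun a => h a z

theorem exists_lie_ne_zero (h : ∃ a a' : A, a * a' ≠ a' * a) : ∃ a a' : A, ⁅a, a'⁆ ≠ 0 :=
  let ⟨a, a', haa'⟩ := h
  ⟨a, a', sub_ne_zero_of_ne haa'⟩

theorem exists_op_lie_ne_zero (h : ∃ a a' : A, a * a' ≠ a' * a) : ∃ c c' : Aᵐᵒᵖ, ⁅c, c'⁆ ≠ 0 :=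
  let ⟨a, a', haa'⟩ := h
  exists_lie_ne_zero ⟨.op a', .op a, fun h0 => haa' (MulOpposite.op_injective h0)⟩

end Noncommutative

namespace GMA

variable {R A B M N G : Type*} [CommRing R] [Ring A] [Algebra R A] [Ring B] [Algebra R B]
  [AddCommGroup M] [Module R M] [AddCommGroup N] [Module R N] [Ring G] [Algebra R G]
  (h : GMA R A B M N G)

theorem ιM_pM_ιA_mul_ιM (a : A) (m : M) : h.ιM (h.pM (h.ιA a * h.ιM m)) = h.ιA a * h.ιM m := by
  obtain ⟨p, hp⟩ := h.mul_AM a m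
  rw [← hp, h.pM_ιM]

theorem ιM_pM_ιM_mul_ιB (m : M) (b : B) : h.ιM (h.pM (h.ιM m * h.ιB b)) = h.ιM m * h.ιB b := by
  obtain ⟨p, hp⟩ := h.mul_MB m b
  rw [← hp, h.pM_ιM]

theorem ιA_one_mul_ιM (m : M) : h.ιA 1 * h.ιM m = h.ιM m := by
  simpa [h.one_def, add_mul, h.mul_BM] using one_mul (h.ιM m)

theorem ιM_mul_ιB_one (m : M) : h.ιM m * h.ιB 1 = h.ιM m := by
  simpa [h.one_def, mul_add, h.mul_MA] using mul_one (h.ιM m)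

/-- The left action of `A` on `M` read off from the multiplication of `G`. -/
abbrev leftModule : Module A M where
  smul a m := h.pM (h.ιA a * h.ιM m)
  one_smul m := by change h.pM (h.ιA 1 * h.ιM m) = m; rw [ιA_one_mul_ιM, h.pM_ιM]
  mul_smul a a' m := by
    change h.pM (h.ιA (a * a') * h.ιM m) = h.pM (h.ιA a * h.ιM (h.pM (h.ιA a' * h.ιM m)))
    rw [ιM_pM_ιA_mul_ιM, ← mul_assoc, h.mul_AA]
  smul_zero a := by change h.pM _ = 0; simp
  smul_add a m m' := by change h.pM _ = h.pM _ + h.pM _; simp [mul_add]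
  add_smul a a' m := by change h.pM _ = h.pM _ + h.pM _; simp [add_mul]
  zero_smul m := by change h.pM _ = 0; simp

/-- The right action of `B` on `M` read off from the multiplication of `G`, as a left action of
`Bᵐᵒᵖ`. -/
abbrev rightModule : Module Bᵐᵒᵖ M where
  smul c m := h.pM (h.ιM m * h.ιB c.unop)
  one_smul m := by change h.pM (h.ιM m * h.ιB 1) = m; rw [ιM_mul_ιB_one, h.pM_ιM]
  mul_smul c c' m := by
    change h.pM (h.ιM m * h.ιB (c'.unop * c.unop)) =
      h.pM (h.ιM (h.pM (h.ιM m * h.ιB c'.unop)) * h.ιB c.unop)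
    rw [ιM_pM_ιM_mul_ιB, mul_assoc, h.mul_BB]
  smul_zero c := by change h.pM _ = 0; simp
  smul_add c m m' := by change h.pM _ = h.pM _ + h.pM _; simp [add_mul]
  add_smul c c' m := by change h.pM _ = h.pM _ + h.pM _; simp [mul_add]
  zero_smul m := by change h.pM _ = 0; simp

theorem eq_add_of_forall_eq_zero (hN : ∀ n : N, n = 0) (g : G) :
    g = h.ιA (h.pA g) + h.ιM (h.pM g) + h.ιB (h.pB g) := by
  simpa [hN (h.pN g)] using h.decomp g

theorem mul_eq_add_of_forall_eq_zero (hN : ∀ n : N, n = 0) (x y : G) :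
    x * y = h.ιA (h.pA x * h.pA y) +
      h.ιM (h.pM (h.ιA (h.pA x) * h.ιM (h.pM y)) + h.pM (h.ιM (h.pM x) * h.ιB (h.pB y))) +
      h.ιB (h.pB x * h.pB y) := by
  conv_lhs => rw [h.eq_add_of_forall_eq_zero hN x, h.eq_add_of_forall_eq_zero hN y]
  simp only [mul_add, add_mul, map_add, ιM_pM_ιA_mul_ιM, ιM_pM_ιM_mul_ιB, h.mul_AA, h.mul_BB,
    h.mul_AB, h.mul_BA, h.mul_MA, h.mul_BM, h.mul_MM, add_zero, zero_add]
  abel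

/-- A generalized matrix algebra with `N = 0` is triangular. -/
def coords (hN : ∀ n : N, n = 0) :
    letI := h.leftModule
    letI := h.rightModule
    TriangularCoords R A Bᵐᵒᵖ M G :=
  letI := h.leftModule
  letI := h.rightModule
  { equiv :=
      { toFun g := (h.pA g, h.pM g, .op (h.pB g))
        map_add' x y := by simp
        map_smul' r x := by simp
        invFun v := h.ιA v.1 + h.ιM v.2.1 + h.ιB v.2.2.unop
        left_inv g := (h.eq_add_of_forall_eq_zero hN g).symm
        right_inv v := by simp [h.pA_ιA, h.pA_ιM, h.pA_ιB, h.pM_ιA, h.pM_ιM, h.pM_ιB, h.pB_ιA,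
          h.pB_ιM, h.pB_ιB] }
    equiv_mul x y := by
      have hxy := h.mul_eq_add_of_forall_eq_zero hN x y
      refine Prod.ext ?_ (Prod.ext ?_ (congrArg MulOpposite.op ?_))
      · simpa [h.pA_ιA, h.pA_ιM, h.pA_ιB] using congrArg h.pA hxy
      · have hmid : h.pM (x * y) = _ := congrArg h.pM hxy
        rw [map_add, map_add, h.pM_ιA, h.pM_ιM, h.pM_ιB, zero_add, add_zero] at hmid
        exact hmid
      · simpa [h.pB_ιA, h.pB_ιM, h.pB_ιB] using congrArg h.pB hxy
    faithful_left a ha := h.faithful_left a fun m => by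
      rw [← ιM_pM_ιA_mul_ιM]
      exact (congrArg h.ιM (ha m)).trans (map_zero _)
    faithful_right c hc := MulOpposite.unop_injective <| h.faithful_right c.unop fun m => by
      rw [← ιM_pM_ιM_mul_ιB]
      exact (congrArg h.ιM (hc m)).trans (map_zero _) }

theorem coords_admissible (hN : ∀ n : N, n = 0)
    (hA : (center A : Set A) ⊆ h.pA '' center G) (hA' : ∃ a a' : A, a * a' ≠ a' * a)
    (hB : (center B : Set B) ⊆ h.pB '' center G) (hB' : ∃ b b' : B, b * b' ≠ b' * b)
    (hloyal : ∀ (a : A) (b : B), (∀ m : M, h.ιA a * h.ιM m * h.ιB b = 0) → a = 0 ∨ b = 0) :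
    letI := h.leftModule
    letI := h.rightModule
    (h.coords hN).Admissible :=
  letI := h.leftModule
  letI := h.rightModule
  { loyal a c hac := by
      refine (hloyal a c.unop fun m => ?_).imp_right (MulOpposite.unop_eq_zero_iff c).1
      have hm : h.ιM (h.pM (h.ιA a * h.ιM (h.pM (h.ιM m * h.ιB c.unop)))) = 0 :=
        (congrArg h.ιM (hac m)).trans (map_zero _)
      rwa [ιM_pM_ιA_mul_ιM, ιM_pM_ιM_mul_ιB, ← mul_assoc] at hm
    noncomm_left := exists_lie_ne_zero hA'
    noncomm_right := exists_op_lie_ne_zero hB'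
    center_left a ha := hA ha
    center_right c hc :=
      let ⟨t, ht, htc⟩ := hB (unop_mem_center hc)
      ⟨t, ht, congrArg MulOpposite.op htc⟩ }

end GMA

/-- **Corollary 4.4 (Benkovič–Eremita).**  Let `T = [A M; O B]` and
`T' = [A' M'; O B']` be triangular algebras over a commutative ring `R` with
`1/2 ∈ R` (generalized matrix algebras whose `N`-corners are zero) and let
`l : T → T'` be a Lie isomorphism.  If
(1) every commuting `R`-linear map on `A'` or on `B'` is proper,
(2) `π_{A'}(Z(T')) = Z(A') ≠ A'` and `π_{B'}(Z(T')) = Z(B') ≠ B'`,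
(3) at least one of `A`, `B` is noncommutative, and
(4) `M'` is loyal,
then `l = m + n`, where `m : T → T'` is an injective homomorphism or the negative of
an injective anti-homomorphism and `n : T → Z(T')` is a linear map vanishing on each
commutator.  Moreover, if `T'` is central over `R`, then `m` is surjective. -/
theorem stmt15 (R A B M N T A' B' M' N' T' : Type*) [CommRing R]
    [Invertible (2 : R)]
    [Ring A] [Algebra R A] [Ring B] [Algebra R B]
    [AddCommGroup M] [Module R M] [AddCommGroup N] [Module R N]
    [Ring T] [Algebra R T]
    [Ring A'] [Algebra R A'] [Ring B'] [Algebra R B']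
    [AddCommGroup M'] [Module R M'] [AddCommGroup N'] [Module R N']
    [Ring T'] [Algebra R T']
    (h : GMA R A B M N T) (h' : GMA R A' B' M' N' T')
    (hN : ∀ n : N, n = 0) (hN' : ∀ n : N', n = 0)
    (l : T ≃ₗ[R] T')
    (hLie : ∀ x y : T, l (x * y - y * x) = l x * l y - l y * l x)
    (h1 : (∀ f : A' →ₗ[R] A', (∀ a, f a * a = a * f a) →
            ∃ z ∈ Subring.center A', ∃ η : A' →ₗ[R] A',
              (∀ a, η a ∈ Subring.center A') ∧ ∀ a, f a = z * a + η a) ∨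
          (∀ f : B' →ₗ[R] B', (∀ b, f b * b = b * f b) →
            ∃ z ∈ Subring.center B', ∃ η : B' →ₗ[R] B',
              (∀ b, η b ∈ Subring.center B') ∧ ∀ b, f b = z * b + η b))
    (h2A : h'.pA '' (Subring.center T' : Set T') = (Subring.center A' : Set A'))
    (h2A' : (Subring.center A' : Set A') ≠ Set.univ)
    (h2B : h'.pB '' (Subring.center T' : Set T') = (Subring.center B' : Set B'))
    (h2B' : (Subring.center B' : Set B') ≠ Set.univ)
    (h3 : (∃ a a' : A, a * a' ≠ a' * a) ∨ (∃ b b' : B, b * b' ≠ b' * b))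
    (h4 : ∀ (a : A') (b : B'),
            (∀ m : M', h'.ιA a * h'.ιM m * h'.ιB b = 0) → a = 0 ∨ b = 0) :
    ∃ m : T →ₗ[R] T', ∃ nm : T →ₗ[R] T',
      (∀ x : T, l x = m x + nm x) ∧
      Function.Injective m ∧
      ((∀ x y : T, m (x * y) = m x * m y) ∨ (∀ x y : T, m (x * y) = -(m y * m x))) ∧
      (∀ x : T, nm x ∈ Subring.center T') ∧
      (∀ x y : T, nm (x * y - y * x) = 0) ∧
      ((Subring.center T' : Set T') = Set.range (algebraMap R T') →
        Function.Surjective m) := by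
  let := h.leftModule
  let := h.rightModule
  let := h'.leftModule
  let := h'.rightModule
  have hT' : (h'.coords hN').Admissible := h'.coords_admissible hN' h2A.ge
    (exists_mul_ne_of_center_ne_univ h2A') h2B.ge (exists_mul_ne_of_center_ne_univ h2B') h4
  have hproper : (jordanForm l hLie).IsProper := h1.elim (hT'.commutingForm_isProper _)
    fun hB => hT'.commutingForm_isProper_right _ (CommutingMapsProper.op hB)
  have hT : ∃ x y : T, ⁅⁅y * y, x⁆, ⁅y, x⁆⁆ ≠ 0 := (h.coords hN).exists_lie_sq_lie_ne_zero
    (h3.imp exists_lie_ne_zero exists_op_lie_ne_zero)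
  exact exists_eq_add_of_jordanForm_isProper hT'.centrallyIndependent hT
    (fun _ => (h.coords hN).eq_zero_of_forall_mul_mem_center) hproper
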